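/- For all n ≥ m ≥ 1, the relations ⊳_{m,n} and ⊲_{m,n} are finite-index congruences on A*: they are equivalence relations with finitely many equivalence classes, and if u ⊳_{m,n} v then for every letter b ∈ A both ub ⊳_{m,n} vb and bu ⊳_{m,n} bv (hence uw ⊳_{m,n} vw and wu ⊳_{m,n} wv for every word w); the same holds for ⊲_{m,n}. -/

import Mathlib

namespace RankerPaper

variable {A : Type*} [DecidableEq A]

/-- Letters of rankers: `X a` ("next `a` to the right") and `Y a` ("next `a` to the left"). -/
inductive RLetter (A : Type*) where
  | X : A → RLetter A
  | Y : A → RLetter A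
  deriving DecidableEq

/-- Least `a`-position of `u` strictly greater than `q` (positions are 1-indexed). -/
def nextOcc (u : List A) (a : A) (q : ℕ) : Option ℕ :=
  ((List.range (u.length + 2)).filter (fun i => decide (q < i ∧ u[i-1]? = some a))).head?

/-- Greatest `a`-position of `u` strictly less than `q` (positions are 1-indexed). -/
def prevOcc (u : List A) (a : A) (q : ℕ) : Option ℕ :=
  ((List.range (u.length + 2)).filter
    (fun i => decide (1 ≤ i ∧ i < q ∧ u[i-1]? = some a))).getLast?

/-- One evaluation step of a ranker letter from position `q`. -/
def stepR (u : List A) : RLetter A → ℕ → Option ℕ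
  | .X a, q => nextOcc u a q
  | .Y a, q => prevOcc u a q

/-- Evaluation of a ranker from position `q`, processing letters left to right. -/
def evalFrom (u : List A) : List (RLetter A) → ℕ → Option ℕ
  | [], q => some q
  | z :: r, q => (stepR u z q).bind (evalFrom u r)

/-- Starting position: `0` for an `X`-letter, `|u|+1` for a `Y`-letter. -/
def startPos (u : List A) : RLetter A → ℕ
  | .X _ => 0
  | .Y _ => u.length + 1

/-- The position `r(u)` defined by the ranker `r` on `u` (`none` if undefined;
empty rankers are considered undefined, rankers being nonempty words). -/
def evalR (u : List A) (r : List (RLetter A)) : Option ℕ :=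
  match r with
  | [] => none
  | z :: t => evalFrom u (z :: t) (startPos u z)

/-- `r` is defined on `u`. -/
def Defined (u : List A) (r : List (RLetter A)) : Prop := (evalR u r).isSome

/-- The position `r(u)` (defaulting to `0` when undefined). -/
def pos (u : List A) (r : List (RLetter A)) : ℕ := (evalR u r).getD 0

/-- Do two ranker letters have the same direction? -/
def sameDir : RLetter A → RLetter A → Bool
  | .X _, .X _ => true
  | .Y _, .Y _ => true
  | _, _ => false

/-- Number of (alternating) blocks of a ranker. -/
def numBlocks : List (RLetter A) → ℕ
  | [] => 0
  | [_] => 1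
  | z :: w :: t => (if sameDir z w then 0 else 1) + numBlocks (w :: t)

def startsX (r : List (RLetter A)) : Prop := ∃ a t, r = RLetter.X a :: t
def startsY (r : List (RLetter A)) : Prop := ∃ a t, r = RLetter.Y a :: t
def endsX (r : List (RLetter A)) : Prop := ∃ a, r.getLast? = some (RLetter.X a)
def endsY (r : List (RLetter A)) : Prop := ∃ a, r.getLast? = some (RLetter.Y a)

/-- `R^X_{m,n}`: rankers with exactly `m` blocks, depth `n`, starting with an `X`-block. -/
def RX (m n : ℕ) (r : List (RLetter A)) : Prop :=
  numBlocks r = m ∧ r.length = n ∧ startsX r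

/-- `R^Y_{m,n}`: rankers with exactly `m` blocks, depth `n`, starting with a `Y`-block. -/
def RY (m n : ℕ) (r : List (RLetter A)) : Prop :=
  numBlocks r = m ∧ r.length = n ∧ startsY r

/-- `uR^X_{m,n}`. -/
def uRX (m n : ℕ) (r : List (RLetter A)) : Prop :=
  (∃ m' n', m' ≤ m ∧ n' ≤ n ∧ RX m' n' r) ∨ (∃ m' n', m' < m ∧ n' < n ∧ RY m' n' r)

/-- `uR^Y_{m,n}`. -/
def uRY (m n : ℕ) (r : List (RLetter A)) : Prop :=
  (∃ m' n', m' ≤ m ∧ n' ≤ n ∧ RY m' n' r) ∨ (∃ m' n', m' < m ∧ n' < n ∧ RX m' n' r)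

/-- `uR_{m,n} = uR^X_{m,n} ∪ uR^Y_{m,n}`. -/
def uR (m n : ℕ) (r : List (RLetter A)) : Prop := uRX m n r ∨ uRY m n r

/-- `uR^X_m = ∪_{n ≥ m} uR^X_{m,n}`. -/
def uRXm (m : ℕ) (r : List (RLetter A)) : Prop := ∃ n, m ≤ n ∧ uRX m n r

/-- `uR^Y_m = ∪_{n ≥ m} uR^Y_{m,n}`. -/
def uRYm (m : ℕ) (r : List (RLetter A)) : Prop := ∃ n, m ≤ n ∧ uRY m n r

/-- `r = Z₁ ⋯ Z_n` is condensed on `u`: it is defined on `u` and there is a chain of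
open intervals `(0;|u|+1) = (i₀;j₀) ⊃ (i₁;j₁) ⊃ ⋯ ⊃ (i_{n-1};j_{n-1}) ∋ r(u)`
updated according to the pairs `Z_ℓ Z_{ℓ+1}`. -/
def Condensed (u : List A) (r : List (RLetter A)) : Prop :=
  ∃ (p : ℕ) (i j : ℕ → ℕ),
    evalR u r = some p ∧
    i 0 = 0 ∧ j 0 = u.length + 1 ∧
    (∀ ℓ a b, 1 ≤ ℓ → r[ℓ-1]? = some (RLetter.X a) → r[ℓ]? = some (RLetter.X b) →
        nextOcc u a (i (ℓ-1)) = some (i ℓ) ∧ j ℓ = j (ℓ-1)) ∧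
    (∀ ℓ a b, 1 ≤ ℓ → r[ℓ-1]? = some (RLetter.Y a) → r[ℓ]? = some (RLetter.Y b) →
        i ℓ = i (ℓ-1) ∧ prevOcc u a (j (ℓ-1)) = some (j ℓ)) ∧
    (∀ ℓ a b, 1 ≤ ℓ → r[ℓ-1]? = some (RLetter.X a) → r[ℓ]? = some (RLetter.Y b) →
        i ℓ = i (ℓ-1) ∧ nextOcc u a (i (ℓ-1)) = some (j ℓ)) ∧
    (∀ ℓ a b, 1 ≤ ℓ → r[ℓ-1]? = some (RLetter.Y a) → r[ℓ]? = some (RLetter.X b) →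
        prevOcc u a (j (ℓ-1)) = some (i ℓ) ∧ j ℓ = j (ℓ-1)) ∧
    (∀ ℓ, 1 ≤ ℓ → ℓ < r.length →
        i (ℓ-1) ≤ i ℓ ∧ j ℓ ≤ j (ℓ-1) ∧ (i (ℓ-1) < i ℓ ∨ j ℓ < j (ℓ-1))) ∧
    i (r.length - 1) < p ∧ p < j (r.length - 1)

/-- `u` and `v` agree on rankers from the set `R`. -/
def AgreeDef (R : List (RLetter A) → Prop) (u v : List A) : Prop :=
  ∀ r, R r → (Defined u r ↔ Defined v r)

/-- `u` and `v` agree on condensed rankers from the set `R`. -/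
def AgreeCond (R : List (RLetter A) → Prop) (u v : List A) : Prop :=
  ∀ r, R r → (Condensed u r ↔ Condensed v r)

/-- `u ⊳_{m,n} v`. -/
def trir (m n : ℕ) (u v : List A) : Prop := AgreeCond (uRX m n) u v

/-- `u ⊲_{m,n} v`. -/
def tril (m n : ℕ) (u v : List A) : Prop := AgreeCond (uRY m n) u v

/-- The alphabet (set of letters) of a word. -/
def alph (u : List A) : Finset A := u.toFinset

/-- Condition (WI 1). -/
def WI1 (m n : ℕ) (u v : List A) : Prop := AgreeDef (uR m n) u v

/-- Condition (WI 2). -/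
def WI2 (m n : ℕ) (u v : List A) : Prop :=
  ∀ r r', uR m n r → uR (m-1) (n-1) r' →
    Defined u r → Defined v r → Defined u r' → Defined v r' →
    compare (pos u r) (pos u r') = compare (pos v r) (pos v r')

/-- Condition (WI 3). -/
def WI3 (m n : ℕ) (u v : List A) : Prop :=
  ∀ r r', uR m n r → uR m (n-1) r' →
    ((endsX r ∧ endsY r') ∨ (endsY r ∧ endsX r')) →
    Defined u r → Defined v r → Defined u r' → Defined v r' →
    compare (pos u r) (pos u r') = compare (pos v r) (pos v r')

/-- Condition (WI 1c). -/
def WI1c (m n : ℕ) (u v : List A) : Prop := AgreeCond (uR m n) u v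

/-- Condition (WI 2c). -/
def WI2c (m n : ℕ) (u v : List A) : Prop :=
  ∀ r r', uR m n r → uR (m-1) (n-1) r' →
    Condensed u r → Condensed v r → Condensed u r' → Condensed v r' →
    compare (pos u r) (pos u r') = compare (pos v r) (pos v r')

/-- Condition (WI 3c). -/
def WI3c (m n : ℕ) (u v : List A) : Prop :=
  ∀ r r', uR m n r → uR m (n-1) r' →
    ((endsX r ∧ endsY r') ∨ (endsY r ∧ endsX r')) →
    Condensed u r → Condensed v r → Condensed u r' → Condensed v r' →
    compare (pos u r) (pos u r') = compare (pos v r) (pos v r')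


set_option linter.unusedSectionVars false

/-! ### Word-based version of condensedness -/

/-- Recursive, factorization-based version of condensedness. -/
def CW : List (RLetter A) → List A → Prop
  | [], _ => False
  | .X a :: r, w => ∃ w0 w1, w = w0 ++ a :: w1 ∧ a ∉ w0 ∧
      (r = [] ∨ (startsX r ∧ CW r w1) ∨ (startsY r ∧ CW r w0))
  | .Y a :: r, w => ∃ w0 w1, w = w0 ++ a :: w1 ∧ a ∉ w1 ∧
      (r = [] ∨ (startsX r ∧ CW r w1) ∨ (startsY r ∧ CW r w0))

def swp : RLetter A → RLetter A
  | .X a => .Y a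
  | .Y a => .X a

theorem swp_swp (z : RLetter A) : swp (swp z) = z := by cases z <;> rfl

theorem fact_unique (a : A) : ∀ (w0 w1 v0 v1 : List A), w0 ++ a :: w1 = v0 ++ a :: v1 →
    a ∉ w0 → a ∉ v0 → w0 = v0 ∧ w1 = v1 := by
  intro w0
  induction w0 with
  | nil => intro w1 v0 v1 h h1 h2; cases v0 <;> simp_all
  | cons x t ih =>
    intro w1 v0 v1 h h1 h2
    cases v0 with
    | nil => simp_all
    | cons y s =>
      simp only [List.cons_append, List.cons.injEq, List.mem_cons, not_or] at h h1 h2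
      have := ih w1 s v1 h.2 h1.2 h2.2
      simp [h.1, this.1, this.2]

theorem sX_swp (r : List (RLetter A)) : startsX (r.map swp) ↔ startsY r := by
  cases r with
  | nil => simp [startsX, startsY]
  | cons z t => cases z <;> simp [startsX, startsY, swp]

theorem sY_swp (r : List (RLetter A)) : startsY (r.map swp) ↔ startsX r := by
  cases r with
  | nil => simp [startsX, startsY]
  | cons z t => cases z <;> simp [startsX, startsY, swp]

theorem nb_swp (r : List (RLetter A)) : numBlocks (r.map swp) = numBlocks r := by
  induction r with
  | nil => rfl
  | cons z t ih =>
    cases t with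
    | nil => rfl
    | cons y s =>
      simp only [List.map_cons] at ih ⊢
      simp only [numBlocks, ih]
      cases z <;> cases y <;> rfl

theorem CW_swp_imp (r : List (RLetter A)) : ∀ w, CW r w → CW (r.map swp) w.reverse := by
  induction r with
  | nil => intro w h; exact h
  | cons z t ih =>
    intro w h
    cases z with
    | X a =>
      obtain ⟨w0, w1, rfl, h1, h2⟩ := h
      refine ⟨w1.reverse, w0.reverse, by simp, by simpa using h1, ?_⟩
      rcases h2 with h | h | h
      · left; simp [h]
      · right; right; exact ⟨(sY_swp t).2 h.1, ih _ h.2⟩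
      · right; left; exact ⟨(sX_swp t).2 h.1, ih _ h.2⟩
    | Y a =>
      obtain ⟨w0, w1, rfl, h1, h2⟩ := h
      refine ⟨w1.reverse, w0.reverse, by simp, by simpa using h1, ?_⟩
      rcases h2 with h | h | h
      · left; simp [h]
      · right; right; exact ⟨(sY_swp t).2 h.1, ih _ h.2⟩
      · right; left; exact ⟨(sX_swp t).2 h.1, ih _ h.2⟩

theorem map_swp_swp (r : List (RLetter A)) : (r.map swp).map swp = r := by
  induction r with
  | nil => rfl
  | cons z t ih => simp only [List.map_cons, ih, swp_swp]

theorem CW_swp (r : List (RLetter A)) (w : List A) : CW (r.map swp) w.reverse ↔ CW r w := by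
  refine ⟨fun h => ?_, CW_swp_imp r w⟩
  have := CW_swp_imp _ _ h
  rwa [map_swp_swp, List.reverse_reverse] at this

theorem CX {a : A} {w0 w1 : List A} (h : a ∉ w0) (r : List (RLetter A)) :
    CW (.X a :: r) (w0 ++ a :: w1) ↔
      (r = [] ∨ (startsX r ∧ CW r w1) ∨ (startsY r ∧ CW r w0)) := by
  constructor
  · rintro ⟨v0, v1, e, h1, h2⟩
    obtain ⟨rfl, rfl⟩ := fact_unique a _ _ _ _ e h h1
    exact h2
  · intro h2; exact ⟨w0, w1, rfl, h, h2⟩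

theorem CY {a : A} {w0 w1 : List A} (h : a ∉ w1) (r : List (RLetter A)) :
    CW (.Y a :: r) (w0 ++ a :: w1) ↔
      (r = [] ∨ (startsX r ∧ CW r w1) ∨ (startsY r ∧ CW r w0)) := by
  constructor
  · rintro ⟨v0, v1, e, h1, h2⟩
    have e' := congrArg List.reverse e
    simp only [List.reverse_append, List.reverse_cons, List.append_assoc, List.singleton_append] at e'
    obtain ⟨e1, e2⟩ := fact_unique a _ _ _ _ e' (by simpa using h) (by simpa using h1)
    rw [List.reverse_inj] at e1 e2
    subst e1 e2
    exact h2
  · intro h2; exact ⟨w0, w1, rfl, h, h2⟩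

theorem CX_mem {a : A} {w : List A} {r : List (RLetter A)} (h : CW (.X a :: r) w) : a ∈ w := by
  obtain ⟨v0, v1, rfl, h1, h2⟩ := h; simp

theorem CY_mem {a : A} {w : List A} {r : List (RLetter A)} (h : CW (.Y a :: r) w) : a ∈ w := by
  obtain ⟨v0, v1, rfl, h1, h2⟩ := h; simp

theorem CW_nil (r : List (RLetter A)) : ¬ CW r [] := by
  cases r with
  | nil => exact fun h => h
  | cons z t =>
    cases z with
    | X a => intro h; simpa using CX_mem h
    | Y a => intro h; simpa using CY_mem h

theorem splitF {a : A} {w : List A} (h : a ∈ w) : ∃ w0 w1, w = w0 ++ a :: w1 ∧ a ∉ w0 :=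
  List.eq_append_cons_of_mem h

theorem splitL {a : A} {w : List A} (h : a ∈ w) : ∃ w0 w1, w = w0 ++ a :: w1 ∧ a ∉ w1 := by
  obtain ⟨w0, w1, e, h1⟩ := splitF (List.mem_reverse.2 h)
  refine ⟨w1.reverse, w0.reverse, ?_, by simpa using h1⟩
  have := congrArg List.reverse e
  simpa using this

theorem CX1 (a : A) (w : List A) : CW [.X a] w ↔ a ∈ w := by
  refine ⟨CX_mem, fun h => ?_⟩
  obtain ⟨w0, w1, rfl, h1⟩ := splitF h
  exact (CX h1 _).2 (Or.inl rfl)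

theorem CY1 (a : A) (w : List A) : CW [.Y a] w ↔ a ∈ w := by
  refine ⟨CY_mem, fun h => ?_⟩
  obtain ⟨w0, w1, rfl, h1⟩ := splitL h
  exact (CY h1 _).2 (Or.inl rfl)

theorem nXY {r : List (RLetter A)} (h : startsX r) : ¬ startsY r := by
  obtain ⟨a, t, rfl⟩ := h
  simp [startsY]

theorem nXnil : ¬ startsX ([] : List (RLetter A)) := by simp [startsX]
theorem nYnil : ¬ startsY ([] : List (RLetter A)) := by simp [startsY]

/-- leading X-block -/
def xb : List (RLetter A) → List A
  | [] => []
  | .X a :: r => a :: xb r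
  | .Y _ :: _ => []

theorem xb_len (r : List (RLetter A)) : (xb r).length ≤ r.length := by
  induction r with
  | nil => simp [xb]
  | cons z t ih => cases z <;> simp [xb, ih]

theorem xb_nil {r : List (RLetter A)} (h : startsY r) : xb r = [] := by
  obtain ⟨a, t, rfl⟩ := h; rfl

theorem sub_first {b : A} {l p q : List A} (h : b ∉ p) :
    (b :: l).Sublist (p ++ b :: q) ↔ l.Sublist q := by
  induction p with
  | nil => simp
  | cons x t ih =>
    simp only [List.mem_cons, not_or] at h
    rw [← ih h.2, List.cons_append]
    constructor
    · intro hh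
      cases hh with
      | cons _ h' => exact h'
      | cons_cons _ h' => exact absurd rfl h.1
    · intro hh; exact hh.cons _

theorem lemA (r : List (RLetter A)) : ∀ (w0 z : List A), startsX r →
    (CW r w0 ↔ (CW r (w0 ++ z) ∧ (xb r).Sublist w0)) := by
  induction r with
  | nil => intro w0 z h; exact absurd h nXnil
  | cons y t ih =>
    intro w0 z h
    cases y with
    | Y b => simp [startsX] at h
    | X b =>
      by_cases hb : b ∈ w0
      · obtain ⟨p, q, rfl, hp⟩ := splitF hb
        rw [List.append_assoc, List.cons_append, CX hp, CX hp]
        simp only [xb]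
        rw [sub_first hp]
        cases t with
        | nil => simp [xb]
        | cons z' t' =>
          cases z' with
          | X c =>
            have h1 : startsX (RLetter.X c :: t') := ⟨c, t', rfl⟩
            have h2 := nXY h1
            have := ih q z h1
            simp [h1, h2, this]
          | Y c =>
            have h1 : startsY (RLetter.Y c :: t') := ⟨c, t', rfl⟩
            have h2 : ¬ startsX (RLetter.Y c :: t') := fun h => nXY h h1
            simp [h1, h2, xb]
      · constructor
        · intro h; exact absurd (CX_mem h) hb
        · rintro ⟨_, h⟩
          exact absurd (h.subset (by simp [xb])) hb

theorem CmapX (l : List A) : ∀ w, l ≠ [] → (CW (l.map RLetter.X) w ↔ l.Sublist w) := by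
  induction l with
  | nil => intro w h; exact absurd rfl h
  | cons b t ih =>
    intro w _
    by_cases hb : b ∈ w
    · obtain ⟨p, q, rfl, hp⟩ := splitF hb
      rw [List.map_cons, CX hp, sub_first hp]
      cases t with
      | nil => simp
      | cons c s =>
        rw [ih q (by simp)]
        simp [startsX, startsY]
    · constructor
      · intro h; exact absurd (CX_mem h) hb
      · intro h; exact absurd (h.subset (by simp)) hb

theorem CmapY (l : List A) (w : List A) (h : l ≠ []) :
    CW (l.reverse.map RLetter.Y) w ↔ l.Sublist w := by
  rw [← CW_swp, List.map_map]
  have : (swp ∘ RLetter.Y : A → RLetter A) = RLetter.X := by funext a; rfl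
  rw [this, CmapX _ _ (by simpa using h), List.reverse_sublist]

theorem nb_map (f : A → RLetter A) (hf : f = .X ∨ f = .Y) (l : List A) (h : l ≠ []) :
    numBlocks (l.map f) = 1 := by
  induction l with
  | nil => exact absurd rfl h
  | cons a t ih =>
    cases t with
    | nil => rfl
    | cons b s =>
      have := ih (by simp)
      simp only [List.map_cons] at this ⊢
      simp only [numBlocks, this]
      rcases hf with rfl | rfl <;> simp [sameDir]

theorem nbXX (a : A) {r : List (RLetter A)} (h : startsX r) :
    numBlocks (.X a :: r) = numBlocks r := by
  obtain ⟨b, t, rfl⟩ := h; simp [numBlocks, sameDir]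
theorem nbXY (a : A) {r : List (RLetter A)} (h : startsY r) :
    numBlocks (.X a :: r) = 1 + numBlocks r := by
  obtain ⟨b, t, rfl⟩ := h; simp [numBlocks, sameDir]
theorem nbYY (a : A) {r : List (RLetter A)} (h : startsY r) :
    numBlocks (.Y a :: r) = numBlocks r := by
  obtain ⟨b, t, rfl⟩ := h; simp [numBlocks, sameDir]
theorem nbYX (a : A) {r : List (RLetter A)} (h : startsX r) :
    numBlocks (.Y a :: r) = 1 + numBlocks r := by
  obtain ⟨b, t, rfl⟩ := h; simp [numBlocks, sameDir]
theorem nb_pos (z : RLetter A) (r : List (RLetter A)) : 1 ≤ numBlocks (z :: r) := by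
  induction r generalizing z with
  | nil => simp [numBlocks]
  | cons y t ih => have := ih y; simp only [numBlocks]; omega

def SX (m n : ℕ) (r : List (RLetter A)) : Prop :=
  (startsX r ∧ numBlocks r ≤ m ∧ r.length ≤ n) ∨ (startsY r ∧ numBlocks r < m ∧ r.length < n)
def SY (m n : ℕ) (r : List (RLetter A)) : Prop :=
  (startsY r ∧ numBlocks r ≤ m ∧ r.length ≤ n) ∨ (startsX r ∧ numBlocks r < m ∧ r.length < n)
def TX (m n : ℕ) (u v : List A) : Prop := ∀ r, SX m n r → (CW r u ↔ CW r v)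
def TY (m n : ℕ) (u v : List A) : Prop := ∀ r, SY m n r → (CW r u ↔ CW r v)

theorem TX.symm {m n : ℕ} {u v : List A} (h : TX m n u v) : TX m n v u :=
  fun r hr => (h r hr).symm
theorem TY.symm {m n : ℕ} {u v : List A} (h : TY m n u v) : TY m n v u :=
  fun r hr => (h r hr).symm

theorem SX_swp {m n : ℕ} {r : List (RLetter A)} : SX m n (r.map swp) ↔ SY m n r := by
  simp only [SX, SY, sX_swp, sY_swp, nb_swp, List.length_map]
theorem SY_swp {m n : ℕ} {r : List (RLetter A)} : SY m n (r.map swp) ↔ SX m n r := by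
  simp only [SX, SY, sX_swp, sY_swp, nb_swp, List.length_map]

theorem TX_rev {m n : ℕ} {u v : List A} (h : TX m n u v) : TY m n u.reverse v.reverse := by
  intro r hr
  have := h _ (SX_swp.2 hr)
  rw [← CW_swp (r.map swp), ← CW_swp (r.map swp) v, map_swp_swp] at this
  exact this
theorem TY_rev {m n : ℕ} {u v : List A} (h : TY m n u v) : TX m n u.reverse v.reverse := by
  intro r hr
  have := h _ (SY_swp.2 hr)
  rw [← CW_swp (r.map swp), ← CW_swp (r.map swp) v, map_swp_swp] at this
  exact this

theorem TX_TY {m n : ℕ} {u v : List A} (h : TX m n u v) : TY (m-1) (n-1) u v := by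
  intro r hr
  apply h
  cases r with
  | nil => rcases hr with h | h
           · exact absurd h.1 nYnil
           · exact absurd h.1 nXnil
  | cons z t =>
    have := nb_pos z t
    rcases hr with ⟨h, h1, h2⟩ | ⟨h, h1, h2⟩
    · right; refine ⟨h, by omega, ?_⟩
      simp only [List.length_cons] at h2 ⊢; omega
    · left; refine ⟨h, by omega, by omega⟩

theorem xb_ne {r : List (RLetter A)} (h : startsX r) : xb r ≠ [] := by
  obtain ⟨a, t, rfl⟩ := h; simp [xb]

theorem lemA2 {r : List (RLetter A)} (h : startsX r) {a : A} {w0 w1 : List A} (ha : a ∉ w0) :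
    CW r w0 ↔ (CW r (w0 ++ a :: w1) ∧
      CW (.X a :: (xb r).reverse.map RLetter.Y) (w0 ++ a :: w1)) := by
  rw [CX ha, lemA r w0 (a :: w1) h]
  have hne := xb_ne h
  have hY : startsY ((xb r).reverse.map RLetter.Y) := by
    cases hh : (xb r).reverse with
    | nil => simp at hh; exact absurd hh hne
    | cons c s => exact ⟨c, _, rfl⟩
  have hX : ¬ startsX ((xb r).reverse.map RLetter.Y) := fun h => nXY h hY
  rw [CmapY _ w0 hne]
  simp [hne, hY, hX, -List.map_reverse]

theorem lemB2 {r : List (RLetter A)} (h : startsY r) {a : A} {w0 w1 : List A} (ha : a ∉ w0) :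
    CW r w1 ↔ (CW r (w0 ++ a :: w1) ∧
      CW (.X a :: (xb (r.map swp)).reverse.map RLetter.X) (w0 ++ a :: w1)) := by
  have h' := (sX_swp r).2 h
  have hne := xb_ne h'
  have key := lemA (r.map swp) w1.reverse (a :: w0.reverse) h'
  rw [CW_swp] at key
  have e : w1.reverse ++ a :: w0.reverse = (w0 ++ a :: w1).reverse := by simp
  rw [e, CW_swp] at key
  rw [CX ha, key]
  have hX : startsX ((xb (r.map swp)).reverse.map RLetter.X) := by
    cases hh : (xb (r.map swp)).reverse with
    | nil => simp at hh; exact absurd hh hne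
    | cons c s => exact ⟨c, _, rfl⟩
  rw [CmapX _ _ (by simpa using hne)]
  have e2 : (xb (r.map swp)).reverse.Sublist w1 ↔ (xb (r.map swp)).Sublist w1.reverse := by
    rw [← List.reverse_sublist, List.reverse_reverse]
  simp [hne, hX, nXY hX, e2, -List.map_reverse]

theorem TX_mem {m n : ℕ} {u v : List A} (h : TX m n u v) (hm : 1 ≤ m) (hn : 1 ≤ n) (a : A) :
    a ∈ u ↔ a ∈ v := by
  rw [← CX1, ← CX1]
  exact h _ (Or.inl ⟨⟨a, [], rfl⟩, by simpa [numBlocks] using hm, by simpa using hn⟩)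

theorem L1 {m n : ℕ} {u0 u1 v : List A} {a : A} (hm : 1 ≤ m) (hn : 1 ≤ n) (ha : a ∉ u0)
    (h : TX m n (u0 ++ a :: u1) v) :
    ∃ v0 v1, v = v0 ++ a :: v1 ∧ a ∉ v0 ∧ TY (m-1) (n-1) u0 v0 ∧ TX m (n-1) u1 v1 := by
  obtain ⟨v0, v1, rfl, hv⟩ := splitF ((TX_mem h hm hn a).1 (by simp))
  refine ⟨v0, v1, rfl, hv, ?_, ?_⟩
  · intro r hr
    rcases hr with ⟨hs, h1, h2⟩ | ⟨hs, h1, h2⟩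
    · have hr0 : r ≠ [] := by rintro rfl; exact nYnil hs
      have hx : ¬ startsX r := fun h => nXY h hs
      have := h (.X a :: r) (Or.inl ⟨⟨a, r, rfl⟩, by rw [nbXY a hs]; omega, by
        simp only [List.length_cons]; omega⟩)
      rw [CX ha, CX hv] at this
      simpa [hr0, hx, hs] using this
    · rw [lemA2 hs (w1 := u1) ha, lemA2 hs (w1 := v1) hv]
      have hne := xb_ne hs
      have hY : startsY ((xb r).reverse.map RLetter.Y) := by
        cases hh : (xb r).reverse with
        | nil => simp at hh; exact absurd hh hne
        | cons c s => exact ⟨c, _, rfl⟩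
      have hl := xb_len r
      obtain ⟨c, t, rfl⟩ := hs
      have hp := nb_pos (.X c) t
      apply and_congr
      · exact h _ (Or.inl ⟨⟨c, t, rfl⟩, by omega, by omega⟩)
      · refine h _ (Or.inl ⟨⟨a, _, rfl⟩, ?_, ?_⟩)
        · rw [nbXY a hY, nb_map _ (Or.inr rfl) _ (by simpa using hne)]; omega
        · simp only [List.length_cons, List.length_map, List.length_reverse] at *; omega
  · intro r hr
    rcases hr with ⟨hs, h1, h2⟩ | ⟨hs, h1, h2⟩
    · have hr0 : r ≠ [] := by rintro rfl; exact nXnil hs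
      have hx := nXY hs
      have := h (.X a :: r) (Or.inl ⟨⟨a, r, rfl⟩, by rw [nbXX a hs]; omega, by
        simp only [List.length_cons]; omega⟩)
      rw [CX ha, CX hv] at this
      simpa [hr0, hx, hs] using this
    · rw [lemB2 hs (w1 := u1) ha, lemB2 hs (w1 := v1) hv]
      have hne := xb_ne ((sX_swp r).2 hs)
      have hX : startsX ((xb (r.map swp)).reverse.map RLetter.X) := by
        cases hh : (xb (r.map swp)).reverse with
        | nil => simp at hh; exact absurd hh hne
        | cons c s => exact ⟨c, _, rfl⟩
      have hl := xb_len (r.map swp)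
      rw [List.length_map] at hl
      apply and_congr
      · exact h _ (Or.inr ⟨hs, by omega, by omega⟩)
      · refine h _ (Or.inl ⟨⟨a, _, rfl⟩, ?_, ?_⟩)
        · rw [nbXX a hX, nb_map _ (Or.inl rfl) _ (by simpa using hne)]; omega
        · simp only [List.length_cons, List.length_map, List.length_reverse] at *; omega

theorem L1Y {m n : ℕ} {u0 u1 v : List A} {a : A} (hm : 1 ≤ m) (hn : 1 ≤ n) (ha : a ∉ u1)
    (h : TY m n (u0 ++ a :: u1) v) :
    ∃ v0 v1, v = v0 ++ a :: v1 ∧ a ∉ v1 ∧ TX (m-1) (n-1) u1 v1 ∧ TY m (n-1) u0 v0 := by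
  have h' := TY_rev h
  have e : (u0 ++ a :: u1).reverse = u1.reverse ++ a :: u0.reverse := by simp
  rw [e] at h'
  obtain ⟨v0, v1, e1, h1, h2, h3⟩ := L1 hm hn (by simpa using ha) h'
  refine ⟨v1.reverse, v0.reverse, ?_, by simpa using h1, ?_, ?_⟩
  · have := congrArg List.reverse e1
    simpa using this
  · simpa using TY_rev h2
  · simpa using TX_rev h3

def Good (n : ℕ) : Prop := ∀ (m : ℕ) (u v : List A) (b : A), TX m n u v →
  TX m n (u ++ [b]) (v ++ [b]) ∧ TX m n (b :: u) (b :: v)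

theorem Good.Y {n : ℕ} (h : Good (A := A) n) (m : ℕ) (u v : List A) (b : A) (h' : TY m n u v) :
    TY m n (u ++ [b]) (v ++ [b]) ∧ TY m n (b :: u) (b :: v) := by
  have := h m _ _ b (TY_rev h')
  constructor
  · simpa using TX_rev this.2
  · simpa using TX_rev this.1

theorem goodR {n : ℕ} (ih : ∀ k < n, Good (A := A) k) (m : ℕ) (u v : List A) (b : A)
    (h : TX m n u v) (r : List (RLetter A)) (hr : SX m n r) (hc : CW r (u ++ [b])) :
    CW r (v ++ [b]) := by
  rcases hr with ⟨⟨a, t, rfl⟩, h1, h2⟩ | ⟨⟨a, t, rfl⟩, h1, h2⟩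
  · have hp := nb_pos (.X a) t
    have hm : 1 ≤ m := by omega
    rw [List.length_cons] at h2
    have hn : 1 ≤ n := by omega
    by_cases hau : a ∈ u
    · obtain ⟨u0, u1, rfl, ha⟩ := splitF hau
      obtain ⟨v0, v1, rfl, hv, k1, k2⟩ := L1 hm hn ha h
      rw [List.append_assoc, List.cons_append] at hc ⊢
      rw [CX ha] at hc
      rw [CX hv]
      rcases hc with hc | ⟨hs, hc⟩ | ⟨hs, hc⟩
      · exact Or.inl hc
      · right; left; refine ⟨hs, ?_⟩
        rw [nbXX a hs] at h1
        exact ((ih (n-1) (by omega) m u1 v1 b k2).1 t (Or.inl ⟨hs, h1, by omega⟩)).1 hc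
      · right; right; refine ⟨hs, ?_⟩
        rw [nbXY a hs] at h1
        exact (k1 t (Or.inl ⟨hs, by omega, by omega⟩)).1 hc
    · have hav : a ∉ v := fun h' => hau ((TX_mem h hm hn a).2 h')
      have hab := CX_mem hc
      simp only [List.mem_append, hau, List.mem_singleton, false_or] at hab
      subst hab
      rw [CX hau] at hc
      rw [CX hav]
      rcases hc with hc | ⟨hs, hc⟩ | ⟨hs, hc⟩
      · exact Or.inl hc
      · exact absurd hc (CW_nil _)
      · right; right; refine ⟨hs, ?_⟩
        rw [nbXY a hs] at h1
        exact (h t (Or.inr ⟨hs, by omega, by omega⟩)).1 hc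
  · have hp := nb_pos (.Y a) t
    rw [List.length_cons] at h2
    by_cases hab : a = b
    · subst hab
      rw [CY (by simp)] at hc
      rw [CY (by simp)]
      rcases hc with hc | ⟨hs, hc⟩ | ⟨hs, hc⟩
      · exact Or.inl hc
      · exact absurd hc (CW_nil _)
      · right; right; refine ⟨hs, ?_⟩
        rw [nbYY a hs] at h1
        exact (h t (Or.inr ⟨hs, by omega, by omega⟩)).1 hc
    · have hau := CY_mem hc
      simp only [List.mem_append, List.mem_singleton, hab, or_false] at hau
      obtain ⟨u0, u1, rfl, ha⟩ := splitL hau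
      obtain ⟨v0, v1, rfl, hv, k1, k2⟩ := L1Y (by omega) (by omega) ha (TX_TY h)
      rw [List.append_assoc, List.cons_append] at hc ⊢
      rw [CY (by simp [ha, hab])] at hc
      rw [CY (by simp [hv, hab])]
      rcases hc with hc | ⟨hs, hc⟩ | ⟨hs, hc⟩
      · exact Or.inl hc
      · right; left; refine ⟨hs, ?_⟩
        rw [nbYX a hs] at h1
        exact ((ih (n-1-1) (by omega) _ u1 v1 b k1).1 t (Or.inl ⟨hs, by omega, by omega⟩)).1 hc
      · right; right; refine ⟨hs, ?_⟩
        rw [nbYY a hs] at h1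
        exact (k2 t (Or.inl ⟨hs, by omega, by omega⟩)).1 hc

theorem goodL {n : ℕ} (ih : ∀ k < n, Good (A := A) k) (m : ℕ) (u v : List A) (b : A)
    (h : TX m n u v) (r : List (RLetter A)) (hr : SX m n r) (hc : CW r (b :: u)) :
    CW r (b :: v) := by
  rcases hr with ⟨⟨a, t, rfl⟩, h1, h2⟩ | ⟨⟨a, t, rfl⟩, h1, h2⟩
  · have hp := nb_pos (.X a) t
    have hm : 1 ≤ m := by omega
    rw [List.length_cons] at h2
    have hn : 1 ≤ n := by omega
    by_cases hab : a = b
    · subst hab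
      rw [← List.nil_append (a :: u), CX (by simp)] at hc
      rw [← List.nil_append (a :: v), CX (by simp)]
      rcases hc with hc | ⟨hs, hc⟩ | ⟨hs, hc⟩
      · exact Or.inl hc
      · right; left; refine ⟨hs, ?_⟩
        rw [nbXX a hs] at h1
        exact (h t (Or.inl ⟨hs, by omega, by omega⟩)).1 hc
      · exact absurd hc (CW_nil _)
    · have hau := CX_mem hc
      simp only [List.mem_cons, hab, false_or] at hau
      obtain ⟨u0, u1, rfl, ha⟩ := splitF hau
      obtain ⟨v0, v1, rfl, hv, k1, k2⟩ := L1 hm hn ha h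
      rw [← List.cons_append, CX (by simp [ha, hab])] at hc
      rw [← List.cons_append, CX (by simp [hv, hab])]
      rcases hc with hc | ⟨hs, hc⟩ | ⟨hs, hc⟩
      · exact Or.inl hc
      · right; left; refine ⟨hs, ?_⟩
        rw [nbXX a hs] at h1
        exact (k2 t (Or.inl ⟨hs, by omega, by omega⟩)).1 hc
      · right; right; refine ⟨hs, ?_⟩
        rw [nbXY a hs] at h1
        exact (((ih (n-1) (by omega)).Y _ u0 v0 b k1).2 t (Or.inl ⟨hs, by omega, by omega⟩)).1 hc
  · have hp := nb_pos (.Y a) t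
    rw [List.length_cons] at h2
    by_cases hau : a ∈ u
    · obtain ⟨u0, u1, rfl, ha⟩ := splitL hau
      obtain ⟨v0, v1, rfl, hv, k1, k2⟩ := L1Y (by omega) (by omega) ha (TX_TY h)
      rw [← List.cons_append, CY ha] at hc
      rw [← List.cons_append, CY hv]
      rcases hc with hc | ⟨hs, hc⟩ | ⟨hs, hc⟩
      · exact Or.inl hc
      · right; left; refine ⟨hs, ?_⟩
        rw [nbYX a hs] at h1
        exact (k1 t (Or.inl ⟨hs, by omega, by omega⟩)).1 hc
      · right; right; refine ⟨hs, ?_⟩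
        rw [nbYY a hs] at h1
        exact (((ih (n-1-1) (by omega)).Y _ u0 v0 b k2).2 t (Or.inl ⟨hs, by omega, by omega⟩)).1 hc
    · have hav : a ∉ v := fun h' => hau ((TX_mem h (by omega) (by omega) a).2 h')
      have hab := CY_mem hc
      simp only [List.mem_cons, hau, or_false] at hab
      subst hab
      rw [← List.nil_append (a :: u), CY hau] at hc
      rw [← List.nil_append (a :: v), CY hav]
      rcases hc with hc | ⟨hs, hc⟩ | ⟨hs, hc⟩
      · exact Or.inl hc
      · right; left; refine ⟨hs, ?_⟩
        rw [nbYX a hs] at h1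
        exact (h t (Or.inl ⟨hs, by omega, by omega⟩)).1 hc
      · exact absurd hc (CW_nil _)

theorem good (n : ℕ) : Good (A := A) n := by
  induction n using Nat.strong_induction_on with
  | _ n ih =>
    intro m u v b h
    exact ⟨fun r hr => ⟨goodR ih m u v b h r hr, goodR ih m v u b h.symm r hr⟩,
      fun r hr => ⟨goodL ih m u v b h r hr, goodL ih m v u b h.symm r hr⟩⟩

/-! ### Bridge between `Condensed` and `CW` -/

theorem nextOcc_mem {u : List A} {a : A} {q k : ℕ} (h : nextOcc u a q = some k) :
    q < k ∧ u[k-1]? = some a := by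
  have := List.mem_of_head? h
  simpa using (List.mem_filter.1 this).2

theorem prevOcc_mem {u : List A} {a : A} {q k : ℕ} (h : prevOcc u a q = some k) :
    1 ≤ k ∧ k < q ∧ u[k-1]? = some a := by
  have := List.mem_of_getLast? h
  simpa using (List.mem_filter.1 this).2

theorem nextOcc_eq {u : List A} {a : A} {q k : ℕ} (h1 : q < k) (h2 : u[k-1]? = some a)
    (h3 : ∀ i, q < i → i < k → u[i-1]? ≠ some a) : nextOcc u a q = some k := by
  unfold nextOcc
  rw [List.head?_filter, List.find?_range_eq_some]
  have := (List.getElem?_eq_some_iff.1 h2).1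
  refine ⟨by simp [h1, h2], by simp <;> omega, ?_⟩
  intro j hj
  simp only [Bool.not_eq_true', decide_eq_false_iff_not, not_and]
  exact fun hq => h3 j hq hj

theorem getLast_range (p : ℕ → Bool) (k N : ℕ) (h : k < N) (hk : p k = true)
    (h3 : ∀ i, k < i → i < N → p i = false) : ((List.range N).filter p).getLast? = some k := by
  induction N with
  | zero => omega
  | succ N ih =>
    rw [List.range_succ, List.filter_append]
    by_cases e : k = N
    · subst e; simp [hk]
    · have := h3 N (by omega) (by omega)
      simp [this]
      simpa using ih (by omega) (fun i a b => h3 i a (by omega))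

theorem prevOcc_eq {u : List A} {a : A} {q k : ℕ} (h0 : 1 ≤ k) (h1 : k < q)
    (h2 : u[k-1]? = some a)
    (h3 : ∀ i, k < i → i < q → u[i-1]? ≠ some a) : prevOcc u a q = some k := by
  unfold prevOcc
  have := (List.getElem?_eq_some_iff.1 h2).1
  apply getLast_range
  · omega
  · simp [h0, h1, h2]
  · intro i hi _
    simp only [decide_eq_false_iff_not, not_and]
    exact fun _ hq => h3 i hi hq

def Upd (u : List A) : RLetter A → RLetter A → ℕ → ℕ → ℕ → ℕ → Prop
  | .X a, .X _, i, j, i', j' => nextOcc u a i = some i' ∧ j' = j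
  | .Y a, .Y _, i, j, i', j' => i' = i ∧ prevOcc u a j = some j'
  | .X a, .Y _, i, _, i', j' => i' = i ∧ nextOcc u a i = some j'
  | .Y a, .X _, _, j, i', j' => prevOcc u a j = some i' ∧ j' = j

def Nst (i j i' j' : ℕ) : Prop := i ≤ i' ∧ j' ≤ j ∧ (i < i' ∨ j' < j)

def stp : RLetter A → ℕ → ℕ → ℕ
  | .X _, i, _ => i
  | .Y _, _, j => j

def GC (u : List A) (z : RLetter A) (t : List (RLetter A)) (i0 j0 : ℕ) : Prop :=
  ∃ (p : ℕ) (i j : ℕ → ℕ), evalFrom u (z :: t) (stp z i0 j0) = some p ∧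
    i 0 = i0 ∧ j 0 = j0 ∧
    (∀ l x y, (z :: t)[l]? = some x → (z :: t)[l+1]? = some y →
      Upd u x y (i l) (j l) (i (l+1)) (j (l+1))) ∧
    (∀ l, l < t.length → Nst (i l) (j l) (i (l+1)) (j (l+1))) ∧
    i t.length < p ∧ p < j t.length

theorem cond_GC (u : List A) (z : RLetter A) (t : List (RLetter A)) :
    Condensed u (z :: t) ↔ GC u z t 0 (u.length + 1) := by
  have es : startPos u z = stp z 0 (u.length + 1) := by cases z <;> rfl
  constructor
  · rintro ⟨p, i, j, h1, h2, h3, hXX, hYY, hXY, hYX, hN, h4, h5⟩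
    refine ⟨p, i, j, by rw [← es]; exact h1, h2, h3, ?_, ?_, by simpa using h4, by simpa using h5⟩
    · intro l x y hx hy
      cases x <;> cases y
      · simpa [Upd] using hXX (l+1) _ _ (by omega) hx hy
      · simpa [Upd] using hXY (l+1) _ _ (by omega) hx hy
      · simpa [Upd] using hYX (l+1) _ _ (by omega) hx hy
      · simpa [Upd] using hYY (l+1) _ _ (by omega) hx hy
    · intro l hl
      simpa [Nst] using hN (l+1) (by omega) (by simpa using hl)
  · rintro ⟨p, i, j, h1, h2, h3, hU, hN, h4, h5⟩
    refine ⟨p, i, j, by rw [← es] at h1; exact h1, h2, h3, ?_, ?_, ?_, ?_, ?_,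
      by simpa using h4, by simpa using h5⟩
    · intro l a b hl hx hy
      obtain ⟨l, rfl⟩ : ∃ k, l = k + 1 := ⟨l-1, by omega⟩
      exact hU l _ _ hx hy
    · intro l a b hl hx hy
      obtain ⟨l, rfl⟩ : ∃ k, l = k + 1 := ⟨l-1, by omega⟩
      exact hU l _ _ hx hy
    · intro l a b hl hx hy
      obtain ⟨l, rfl⟩ : ∃ k, l = k + 1 := ⟨l-1, by omega⟩
      exact hU l _ _ hx hy
    · intro l a b hl hx hy
      obtain ⟨l, rfl⟩ : ∃ k, l = k + 1 := ⟨l-1, by omega⟩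
      exact hU l _ _ hx hy
    · intro l hl hlt
      obtain ⟨l, rfl⟩ : ∃ k, l = k + 1 := ⟨l-1, by omega⟩
      exact hN l (by simpa using hlt)

theorem Upd_step {u : List A} {z y : RLetter A} {i j i' j' : ℕ} (h : Upd u z y i j i' j') :
    stepR u z (stp z i j) = some (stp y i' j') := by
  cases z <;> cases y <;> simp_all [Upd, stepR, stp]

theorem GC_nil (u : List A) (z : RLetter A) (i0 j0 : ℕ) :
    GC u z [] i0 j0 ↔ ∃ p, stepR u z (stp z i0 j0) = some p ∧ i0 < p ∧ p < j0 := by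
  constructor
  · rintro ⟨p, i, j, h1, rfl, rfl, _, _, h2, h3⟩
    refine ⟨p, ?_, h2, h3⟩
    simp only [evalFrom] at h1
    cases hh : stepR u z (stp z (i 0) (j 0)) with
    | none => simp [hh] at h1
    | some q => simpa [hh, evalFrom] using h1
  · rintro ⟨p, h1, h2, h3⟩
    refine ⟨p, fun _ => i0, fun _ => j0, by simp [evalFrom, h1], rfl, rfl, ?_, ?_, h2, h3⟩
    · intro l x y _ hy; simp at hy
    · intro l hl; simp at hl

theorem GC_cons (u : List A) (z y : RLetter A) (t : List (RLetter A)) (i0 j0 : ℕ) :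
    GC u z (y :: t) i0 j0 ↔
      ∃ i' j', Upd u z y i0 j0 i' j' ∧ Nst i0 j0 i' j' ∧ GC u y t i' j' := by
  constructor
  · rintro ⟨p, i, j, h1, rfl, rfl, hU, hN, h2, h3⟩
    have hU0 := hU 0 z y rfl rfl
    refine ⟨i 1, j 1, hU0, hN 0 (by simp), p, fun k => i (k+1), fun k => j (k+1), ?_, rfl, rfl,
      ?_, ?_, h2, h3⟩
    · rw [evalFrom, Upd_step hU0] at h1
      exact h1
    · intro l x w hx hw
      exact hU (l+1) x w hx hw
    · intro l hl
      exact hN (l+1) (by simpa using hl)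
  · rintro ⟨i', j', hU0, hN0, p, i, j, h1, rfl, rfl, hU, hN, h2, h3⟩
    refine ⟨p, fun k => Nat.casesOn k i0 i, fun k => Nat.casesOn k j0 j, ?_, rfl, rfl,
      ?_, ?_, h2, h3⟩
    · rw [evalFrom, Upd_step hU0]
      exact h1
    · intro l x w hx hw
      cases l with
      | zero =>
        simp at hx hw
        subst hx hw
        exact hU0
      | succ l => exact hU l x w hx hw
    · intro l hl
      cases l with
      | zero => exact hN0
      | succ l => exact hN l (by simpa using hl)

theorem GC_lt {u : List A} (t : List (RLetter A)) : ∀ {z i j}, GC u z t i j → i < j := by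
  induction t with
  | nil => intro z i j h; rw [GC_nil] at h; obtain ⟨p, _, h1, h2⟩ := h; omega
  | cons y t ih =>
    intro z i j h
    rw [GC_cons] at h
    obtain ⟨i', j', _, ⟨h1, h2, _⟩, h3⟩ := h
    have := ih h3
    omega

theorem get_mid {p w s : List A} {i : ℕ} (h1 : p.length < i) (h2 : i ≤ p.length + w.length) :
    (p ++ (w ++ s))[i-1]? = w[i-1-p.length]? := by
  rw [List.getElem?_append_right (by omega), List.getElem?_append_left (by omega)]

theorem next_fact (p w0 w1 s : List A) (a : A) (h : a ∉ w0) :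
    nextOcc (p ++ ((w0 ++ a :: w1) ++ s)) a p.length = some (p.length + w0.length + 1) := by
  apply nextOcc_eq
  · omega
  · rw [get_mid (by omega) (by simp <;> omega)]
    have : p.length + w0.length + 1 - 1 - p.length = w0.length := by omega
    rw [this]; simp
  · intro i h1 h2 h3
    rw [get_mid (by omega) (by simp <;> omega), List.getElem?_append_left (by omega)] at h3
    exact h (List.mem_of_getElem? h3)

theorem next_none {p w s : List A} {a : A} (h : a ∉ w) {q : ℕ}
    (hq : nextOcc (p ++ (w ++ s)) a p.length = some q) : p.length + w.length + 1 ≤ q := by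
  obtain ⟨h1, h2⟩ := nextOcc_mem hq
  by_contra hc
  rw [get_mid h1 (by omega)] at h2
  exact h (List.mem_of_getElem? h2)

theorem prev_fact (p w0 w1 s : List A) (a : A) (h : a ∉ w1) :
    prevOcc (p ++ ((w0 ++ a :: w1) ++ s)) a (p.length + (w0 ++ a :: w1).length + 1) =
      some (p.length + w0.length + 1) := by
  apply prevOcc_eq
  · omega
  · simp <;> omega
  · rw [get_mid (by omega) (by simp <;> omega)]
    have : p.length + w0.length + 1 - 1 - p.length = w0.length := by omega
    rw [this]; simp
  · intro i h1 h2 h3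
    simp only [List.length_append, List.length_cons] at h2
    rw [get_mid (by omega) (by simp <;> omega), List.getElem?_append_right (by omega)] at h3
    obtain ⟨k, hk⟩ : ∃ k, i - 1 - p.length - w0.length = k + 1 :=
      ⟨i - 1 - p.length - w0.length - 1, by omega⟩
    rw [hk, List.getElem?_cons_succ] at h3
    exact h (List.mem_of_getElem? h3)

theorem prev_none {p w s : List A} {a : A} (h : a ∉ w) {q : ℕ}
    (hq : prevOcc (p ++ (w ++ s)) a (p.length + w.length + 1) = some q) : q ≤ p.length := by
  obtain ⟨h0, h1, h2⟩ := prevOcc_mem hq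
  by_contra hc
  rw [get_mid (by omega) (by omega)] at h2
  exact h (List.mem_of_getElem? h2)

theorem GC_CW (t : List (RLetter A)) : ∀ (z : RLetter A) (u p w s : List A), u = p ++ (w ++ s) →
    (GC u z t p.length (p.length + w.length + 1) ↔ CW (z :: t) w) := by
  induction t with
  | nil =>
    rintro z u p w s rfl
    rw [GC_nil]
    cases z with
    | X a =>
      rw [CX1]
      constructor
      · rintro ⟨q, h1, h2, h3⟩
        by_contra hc
        have := next_none hc h1
        omega
      · intro h
        obtain ⟨w0, w1, rfl, ha⟩ := splitF h
        exact ⟨_, next_fact p w0 w1 s a ha, by omega, by simp <;> omega⟩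
    | Y a =>
      rw [CY1]
      constructor
      · rintro ⟨q, h1, h2, h3⟩
        by_contra hc
        have := prev_none hc h1
        omega
      · intro h
        obtain ⟨w0, w1, rfl, ha⟩ := splitL h
        exact ⟨_, prev_fact p w0 w1 s a ha, by omega, by simp <;> omega⟩
  | cons y t ih =>
    rintro z u p w s hu
    rw [GC_cons]
    cases z with
    | X a =>
      by_cases haw : a ∈ w
      · obtain ⟨w0, w1, rfl, ha⟩ := splitF haw
        have hn := next_fact p w0 w1 s a ha
        rw [← hu] at hn
        rw [CX ha]
        cases y with
        | X b =>
          have := ih (.X b) u (p ++ (w0 ++ [a])) w1 s (by simp [hu])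
          simp only [Upd, hn]
          simp only [List.length_append, List.length_cons, List.length_nil] at this ⊢
          simp only [startsX, startsY, ← this]
          constructor
          · rintro ⟨i', j', ⟨h1, rfl⟩, _, h3⟩
            right; left
            refine ⟨⟨_, _, rfl⟩, ?_⟩
            obtain rfl := Option.some.inj h1
            convert h3 using 1 <;> omega
          · rintro (h | ⟨_, h⟩ | ⟨⟨_, _, h⟩, _⟩)
            · simp at h
            · refine ⟨_, _, ⟨rfl, rfl⟩, ⟨by omega, le_refl _, by omega⟩, ?_⟩
              convert h using 1 <;> omega
            · simp at h
        | Y b =>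
          have := ih (.Y b) u p w0 (a :: w1 ++ s) (by simp [hu])
          simp only [Upd, hn]
          simp only [List.length_append, List.length_cons] at this ⊢
          simp only [startsX, startsY, ← this]
          constructor
          · rintro ⟨i', j', ⟨rfl, h1⟩, _, h3⟩
            right; right
            refine ⟨⟨_, _, rfl⟩, ?_⟩
            obtain rfl := Option.some.inj h1
            exact h3
          · rintro (h | ⟨⟨_, _, h⟩, _⟩ | ⟨_, h⟩)
            · simp at h
            · simp at h
            · exact ⟨_, _, ⟨rfl, rfl⟩, ⟨le_refl _, by omega, by omega⟩, h⟩
      · constructor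
        · rintro ⟨i', j', h1, ⟨h2, h3, h4⟩, h5⟩
          exfalso
          have hlt := GC_lt _ h5
          cases y with
          | X b =>
            obtain ⟨h1, rfl⟩ := h1
            rw [hu] at h1
            have := next_none haw h1
            omega
          | Y b =>
            obtain ⟨rfl, h1⟩ := h1
            rw [hu] at h1
            have := next_none haw h1
            omega
        · intro h; exact absurd (CX_mem h) haw
    | Y a =>
      by_cases haw : a ∈ w
      · obtain ⟨w0, w1, rfl, ha⟩ := splitL haw
        have hn := prev_fact p w0 w1 s a ha
        rw [← hu] at hn
        rw [CY ha]
        cases y with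
        | X b =>
          have := ih (.X b) u (p ++ (w0 ++ [a])) w1 s (by simp [hu])
          simp only [Upd, hn]
          simp only [List.length_append, List.length_cons, List.length_nil] at this ⊢
          simp only [startsX, startsY, ← this]
          constructor
          · rintro ⟨i', j', ⟨h1, rfl⟩, _, h3⟩
            right; left
            refine ⟨⟨_, _, rfl⟩, ?_⟩
            obtain rfl := Option.some.inj h1
            convert h3 using 1 <;> omega
          · rintro (h | ⟨_, h⟩ | ⟨⟨_, _, h⟩, _⟩)
            · simp at h
            · refine ⟨_, _, ⟨rfl, rfl⟩, ⟨by omega, le_refl _, by omega⟩, ?_⟩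
              convert h using 1 <;> omega
            · simp at h
        | Y b =>
          have := ih (.Y b) u p w0 (a :: w1 ++ s) (by simp [hu])
          simp only [Upd, hn]
          simp only [List.length_append, List.length_cons] at this ⊢
          simp only [startsX, startsY, ← this]
          constructor
          · rintro ⟨i', j', ⟨rfl, h1⟩, _, h3⟩
            right; right
            refine ⟨⟨_, _, rfl⟩, ?_⟩
            obtain rfl := Option.some.inj h1
            exact h3
          · rintro (h | ⟨⟨_, _, h⟩, _⟩ | ⟨_, h⟩)
            · simp at h
            · simp at h
            · exact ⟨_, _, ⟨rfl, rfl⟩, ⟨le_refl _, by omega, by omega⟩, h⟩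
      · constructor
        · rintro ⟨i', j', h1, ⟨h2, h3, h4⟩, h5⟩
          exfalso
          have hlt := GC_lt _ h5
          cases y with
          | X b =>
            obtain ⟨h1, rfl⟩ := h1
            rw [hu] at h1
            have := prev_none haw h1
            omega
          | Y b =>
            obtain ⟨rfl, h1⟩ := h1
            rw [hu] at h1
            have := prev_none haw h1
            omega
        · intro h; exact absurd (CY_mem h) haw

theorem cond_CW (u : List A) (r : List (RLetter A)) : Condensed u r ↔ CW r u := by
  cases r with
  | nil =>
    constructor
    · rintro ⟨p, i, j, h, _⟩; simp [evalR] at h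
    · intro h; exact absurd h (fun h => h)
  | cons z t =>
    rw [cond_GC]
    have := GC_CW t z u [] u [] (by simp)
    simpa using this

theorem uRX_SX (m n : ℕ) (r : List (RLetter A)) : uRX m n r ↔ SX m n r := by
  constructor
  · rintro (⟨m', n', h1, h2, rfl, rfl, h3⟩ | ⟨m', n', h1, h2, rfl, rfl, h3⟩)
    · exact Or.inl ⟨h3, h1, h2⟩
    · exact Or.inr ⟨h3, h1, h2⟩
  · rintro (⟨h3, h1, h2⟩ | ⟨h3, h1, h2⟩)
    · exact Or.inl ⟨_, _, h1, h2, rfl, rfl, h3⟩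
    · exact Or.inr ⟨_, _, h1, h2, rfl, rfl, h3⟩

theorem uRY_SY (m n : ℕ) (r : List (RLetter A)) : uRY m n r ↔ SY m n r := by
  constructor
  · rintro (⟨m', n', h1, h2, rfl, rfl, h3⟩ | ⟨m', n', h1, h2, rfl, rfl, h3⟩)
    · exact Or.inl ⟨h3, h1, h2⟩
    · exact Or.inr ⟨h3, h1, h2⟩
  · rintro (⟨h3, h1, h2⟩ | ⟨h3, h1, h2⟩)
    · exact Or.inl ⟨_, _, h1, h2, rfl, rfl, h3⟩
    · exact Or.inr ⟨_, _, h1, h2, rfl, rfl, h3⟩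

theorem trir_TX (m n : ℕ) (u v : List A) : trir m n u v ↔ TX m n u v := by
  simp only [trir, AgreeCond, TX, uRX_SX, cond_CW]
theorem tril_TY (m n : ℕ) (u v : List A) : tril m n u v ↔ TY m n u v := by
  simp only [tril, AgreeCond, TY, uRY_SY, cond_CW]

theorem agree_equiv (R : List (RLetter A) → Prop) :
    Equivalence (fun u v : List A => AgreeCond R u v) :=
  ⟨fun _ _ _ => Iff.rfl, fun h r hr => (h r hr).symm, fun h k r hr => (h r hr).trans (k r hr)⟩

theorem finite_letters [Finite A] : Finite (RLetter A) := by
  let f : A ⊕ A → RLetter A := Sum.elim .X .Y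
  refine Finite.of_surjective f ?_
  intro z
  cases z with
  | X a => exact ⟨Sum.inl a, rfl⟩
  | Y a => exact ⟨Sum.inr a, rfl⟩

theorem agree_finite [Finite A] (R : List (RLetter A) → Prop) (n : ℕ)
    (hR : ∀ r, R r → r.length ≤ n) :
    ∃ S : Finset (List A), ∀ u : List A, ∃ v ∈ S, AgreeCond R u v := by
  classical
  have := finite_letters (A := A)
  have hfin : {r : List (RLetter A) | r.length ≤ n}.Finite := List.finite_length_le _ n
  have : Finite {r : List (RLetter A) | r.length ≤ n} := hfin
  let f : List A → Set {r : List (RLetter A) | r.length ≤ n} := fun u => {r | Condensed u r.1}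
  have hf : (Set.range f).Finite := Set.toFinite _
  obtain ⟨T, hT⟩ : ∃ T : Finset (List A), f '' T = Set.range f := by
    obtain ⟨T, _, hT⟩ := Set.exists_subset_bijOn Set.univ f
    have hTf : T.Finite := Set.Finite.of_finite_image (hf.subset (Set.image_subset_range f T)) hT.injOn
    refine ⟨hTf.toFinset, ?_⟩
    rw [Set.Finite.coe_toFinset, hT.image_eq, Set.image_univ]
  refine ⟨T, fun u => ?_⟩
  have : f u ∈ f '' T := by rw [hT]; exact ⟨u, rfl⟩
  obtain ⟨v, hv, e⟩ := this
  refine ⟨v, hv, fun r hr => ?_⟩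
  have := congrArg (fun s => (⟨r, hR r hr⟩ : {r : List (RLetter A) | r.length ≤ n}) ∈ s) e
  exact (iff_of_eq this).symm

theorem word_ext (P : List A → List A → Prop)
    (h : ∀ u v : List A, P u v → ∀ b : A, P (u ++ [b]) (v ++ [b]) ∧ P (b :: u) (b :: v)) :
    ∀ u v w : List A, P u v → P (u ++ w) (v ++ w) ∧ P (w ++ u) (w ++ v) := by
  intro u v w huv
  constructor
  · induction w generalizing u v with
    | nil => simpa using huv
    | cons b w ih => simpa using ih _ _ (h u v huv b).1
  · induction w with
    | nil => simpa using huv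
    | cons b w ih => exact (h _ _ ih b).2

/-- For `n ≥ m ≥ 1`, `⊳_{m,n}` and `⊲_{m,n}` are finite-index
congruences on `A*`. -/
theorem statement9 [Fintype A] (m n : ℕ) (hm : 1 ≤ m) (hmn : m ≤ n) :
    Equivalence (fun u v : List A => trir m n u v) ∧
    Equivalence (fun u v : List A => tril m n u v) ∧
    (∃ S : Finset (List A), ∀ u : List A, ∃ v ∈ S, trir m n u v) ∧
    (∃ S : Finset (List A), ∀ u : List A, ∃ v ∈ S, tril m n u v) ∧
    (∀ u v : List A, trir m n u v → ∀ b : A,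
        trir m n (u ++ [b]) (v ++ [b]) ∧ trir m n (b :: u) (b :: v)) ∧
    (∀ u v w : List A, trir m n u v →
        trir m n (u ++ w) (v ++ w) ∧ trir m n (w ++ u) (w ++ v)) ∧
    (∀ u v : List A, tril m n u v → ∀ b : A,
        tril m n (u ++ [b]) (v ++ [b]) ∧ tril m n (b :: u) (b :: v)) ∧
    (∀ u v w : List A, tril m n u v →
        tril m n (u ++ w) (v ++ w) ∧ tril m n (w ++ u) (w ++ v)) := by
  have hX : ∀ u v : List A, trir m n u v → ∀ b : A,
      trir m n (u ++ [b]) (v ++ [b]) ∧ trir m n (b :: u) (b :: v) := by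
    intro u v h b
    simp only [trir_TX] at h ⊢
    exact good n m u v b h
  have hY : ∀ u v : List A, tril m n u v → ∀ b : A,
      tril m n (u ++ [b]) (v ++ [b]) ∧ tril m n (b :: u) (b :: v) := by
    intro u v h b
    simp only [tril_TY] at h ⊢
    exact (good n).Y m u v b h
  refine ⟨agree_equiv _, agree_equiv _, agree_finite _ n ?_, agree_finite _ n ?_, hX,
    word_ext _ hX, hY, word_ext _ hY⟩
  · rintro r (⟨m', n', h1, h2, h3, h4, h5⟩ | ⟨m', n', h1, h2, h3, h4, h5⟩) <;> omega
  · rintro r (⟨m', n', h1, h2, h3, h4, h5⟩ | ⟨m', n', h1, h2, h3, h4, h5⟩) <;> omega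

end RankerPaper
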